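/- arXiv:1805.11810 — 2 statements merged into one kernel-verified Lean document; each statement's English description precedes it below -/
import Mathlib

section
/- Let u,w ∈ ℝ² be linearly independent, C = C(u,w) the pointed convex cone they generate, and v its unit bisector; assume C ⊆ H_r(v,0). Let β > 0, let D ⊆ (−C) ∩ H_l(v,−β) be a locally finite set, let c : D → ℂ, and let g ∈ C^{2*}(ℝ²) with supp(g) ⊆ H_l(v,α) for some α ∈ ℝ. Then there exist f ∈ C^{2*}(ℝ²) and α' ∈ ℝ with supp(f) ⊆ H_l(v,α') such that for every z ∈ ℝ² the set {p ∈ D : f(z−p) ≠ 0} is finite and f(z) + ∑_{p ∈ D} c(p) f(z−p) = g(z). -/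
/-!
With `⟨·,·⟩` the Euclidean pairing, both generators of the cone pair strictly positively with the
bisector `v` (strict Cauchy–Schwarz), so each slice `(-C) ∩ H_r(v, R)` is bounded and meets `D` in
a finite set (`cone_slice_finite`). Hence for `f` supported in `H_l(v, α)` the convolution
`∑ c(p) f(z - p)` is, on every half-plane `⟨z, v⟩ ≥ R`, a fixed finite sum (`conv_eq_sum`), and so
`T f = g - μ ⋆ f` preserves both `C^{2*}` and the support condition.

As `⟨p, v⟩ ≤ -β` on `D`, the value `T f z` only involves values of `f` at points whose pairing with
`v` is at least `⟨z, v⟩ + β`. The iterates `Tⁿ 0`, i.e. the partial sums of the Neumann series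
`∑ (-μ)ⁿ ⋆ g`, therefore stabilise on the half-planes `⟨z, v⟩ > α - n β`, which exhaust the plane.
Their pointwise limit locally equals an iterate, so it is a `C^{2*}` function fixed by `T`.
-/

noncomputable section

/-- Partial derivative in the first (x) variable. -/
def pX (f : ℝ × ℝ → ℂ) : ℝ × ℝ → ℂ := fun p => deriv (fun x => f (x, p.2)) p.1

/-- Partial derivative in the second (y) variable. -/
def pY (f : ℝ × ℝ → ℂ) : ℝ × ℝ → ℂ := fun p => deriv (fun y => f (p.1, y)) p.2

/-- `f ∈ C^{2*}(ℝ²)`: `f` is continuous, the first partials and the mixed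
second partials `∂²f/∂x∂y`, `∂²f/∂y∂x` exist everywhere, and both mixed second
partials are continuous on `ℝ²`. -/
def C2Star (f : ℝ × ℝ → ℂ) : Prop :=
  Continuous f ∧
  (∀ p : ℝ × ℝ, DifferentiableAt ℝ (fun x => f (x, p.2)) p.1) ∧
  (∀ p : ℝ × ℝ, DifferentiableAt ℝ (fun y => f (p.1, y)) p.2) ∧
  (∀ p : ℝ × ℝ, DifferentiableAt ℝ (fun x => pY f (x, p.2)) p.1) ∧
  (∀ p : ℝ × ℝ, DifferentiableAt ℝ (fun y => pX f (p.1, y)) p.2) ∧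
  Continuous (pX (pY f)) ∧ Continuous (pY (pX f))

open Pointwise
/-- Euclidean norm on `ℝ²` (viewed as `ℝ × ℝ`). -/
def eNorm2 (p : ℝ × ℝ) : ℝ := Real.sqrt (p.1 ^ 2 + p.2 ^ 2)

/-- The (pointed) convex cone generated by `u` and `w`. -/
def coneOf (u w : ℝ × ℝ) : Set (ℝ × ℝ) :=
  {p | ∃ s t : ℝ, 0 ≤ s ∧ 0 ≤ t ∧ p = s • u + t • w}

/-- The unit bisector of the cone generated by `u` and `w`: the unit vector in
the direction of `u/‖u‖ + w/‖w‖`. -/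
def unitBisector (u w : ℝ × ℝ) : ℝ × ℝ :=
  (eNorm2 ((eNorm2 u)⁻¹ • u + (eNorm2 w)⁻¹ • w))⁻¹ •
    ((eNorm2 u)⁻¹ • u + (eNorm2 w)⁻¹ • w)

/-- Right half-plane `H_r(v,α) = {p : ⟨p,v⟩ ≥ α}`. -/
def Hr (v : ℝ × ℝ) (α : ℝ) : Set (ℝ × ℝ) := {p | α ≤ v.1 * p.1 + v.2 * p.2}

/-- Left half-plane `H_l(v,α) = {p : ⟨p,v⟩ ≤ α}`. -/
def Hl (v : ℝ × ℝ) (α : ℝ) : Set (ℝ × ℝ) := {p | v.1 * p.1 + v.2 * p.2 ≤ α}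

/-- A set is locally finite if it meets every compact set in a finite set. -/
def LocallyFiniteSet (D : Set (ℝ × ℝ)) : Prop :=
  ∀ K : Set (ℝ × ℝ), IsCompact K → (D ∩ K).Finite

/-! ### The class `C^{2*}` -/

theorem pX_eqOn {f h : ℝ × ℝ → ℂ} {U : Set (ℝ × ℝ)} (hU : IsOpen U) (hfh : Set.EqOn f h U) :
    Set.EqOn (pX f) (pX h) U := by
  intro p hp
  refine Filter.EventuallyEq.deriv_eq ?_
  have hc : ContinuousAt (fun x : ℝ => (x, p.2)) p.1 := by fun_prop
  filter_upwards [hc.preimage_mem_nhds (hU.mem_nhds hp)] with x hx using hfh hx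

theorem pY_eqOn {f h : ℝ × ℝ → ℂ} {U : Set (ℝ × ℝ)} (hU : IsOpen U) (hfh : Set.EqOn f h U) :
    Set.EqOn (pY f) (pY h) U := by
  intro p hp
  refine Filter.EventuallyEq.deriv_eq ?_
  have hc : ContinuousAt (fun y : ℝ => (p.1, y)) p.2 := by fun_prop
  filter_upwards [hc.preimage_mem_nhds (hU.mem_nhds hp)] with x hx using hfh hx

theorem diffX_of_eqOn {f h : ℝ × ℝ → ℂ} {U : Set (ℝ × ℝ)} (hU : IsOpen U) (hfh : Set.EqOn f h U)
    {p : ℝ × ℝ} (hp : p ∈ U) (hd : DifferentiableAt ℝ (fun x => h (x, p.2)) p.1) :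
    DifferentiableAt ℝ (fun x => f (x, p.2)) p.1 := by
  refine hd.congr_of_eventuallyEq ?_
  have hc : ContinuousAt (fun x : ℝ => (x, p.2)) p.1 := by fun_prop
  filter_upwards [hc.preimage_mem_nhds (hU.mem_nhds hp)] with x hx using hfh hx

theorem diffY_of_eqOn {f h : ℝ × ℝ → ℂ} {U : Set (ℝ × ℝ)} (hU : IsOpen U) (hfh : Set.EqOn f h U)
    {p : ℝ × ℝ} (hp : p ∈ U) (hd : DifferentiableAt ℝ (fun y => h (p.1, y)) p.2) :
    DifferentiableAt ℝ (fun y => f (p.1, y)) p.2 := by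
  refine hd.congr_of_eventuallyEq ?_
  have hc : ContinuousAt (fun y : ℝ => (p.1, y)) p.2 := by fun_prop
  filter_upwards [hc.preimage_mem_nhds (hU.mem_nhds hp)] with x hx using hfh hx

/-- Membership in `C^{2*}` is a local property. -/
theorem C2Star.of_local {f : ℝ × ℝ → ℂ}
    (H : ∀ z, ∃ U : Set (ℝ × ℝ), IsOpen U ∧ z ∈ U ∧ ∃ h, C2Star h ∧ Set.EqOn f h U) :
    C2Star f := by
  refine ⟨continuous_iff_continuousAt.2 fun z => ?_, fun z => ?_, fun z => ?_, fun z => ?_,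
    fun z => ?_, continuous_iff_continuousAt.2 fun z => ?_,
    continuous_iff_continuousAt.2 fun z => ?_⟩ <;>
  obtain ⟨U, hU, hz, h, ⟨h1, h2, h3, h4, h5, h6, h7⟩, hfh⟩ := H z
  · exact h1.continuousAt.congr (hfh.symm.eventuallyEq_of_mem (hU.mem_nhds hz))
  · exact diffX_of_eqOn hU hfh hz (h2 z)
  · exact diffY_of_eqOn hU hfh hz (h3 z)
  · exact diffX_of_eqOn hU (pY_eqOn hU hfh) hz (h4 z)
  · exact diffY_of_eqOn hU (pX_eqOn hU hfh) hz (h5 z)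
  · exact h6.continuousAt.congr
      ((pX_eqOn hU (pY_eqOn hU hfh)).symm.eventuallyEq_of_mem (hU.mem_nhds hz))
  · exact h7.continuousAt.congr
      ((pY_eqOn hU (pX_eqOn hU hfh)).symm.eventuallyEq_of_mem (hU.mem_nhds hz))

section AddTranslate

variable {f h : ℝ × ℝ → ℂ} (a : ℂ) (q : ℝ × ℝ)

theorem hasDerivX_add_translate
    (hf : ∀ p : ℝ × ℝ, DifferentiableAt ℝ (fun x => f (x, p.2)) p.1)
    (hh : ∀ p : ℝ × ℝ, DifferentiableAt ℝ (fun x => h (x, p.2)) p.1) (p : ℝ × ℝ) :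
    HasDerivAt (fun x => f (x, p.2) + a * h ((x, p.2) - q)) (pX f p + a * pX h (p - q)) p.1 :=
  (hf p).hasDerivAt.add
    ((HasDerivAt.comp_sub_const p.1 q.1 (hh (p - q)).hasDerivAt).const_mul a)

theorem hasDerivY_add_translate
    (hf : ∀ p : ℝ × ℝ, DifferentiableAt ℝ (fun y => f (p.1, y)) p.2)
    (hh : ∀ p : ℝ × ℝ, DifferentiableAt ℝ (fun y => h (p.1, y)) p.2) (p : ℝ × ℝ) :
    HasDerivAt (fun y => f (p.1, y) + a * h ((p.1, y) - q)) (pY f p + a * pY h (p - q)) p.2 :=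
  (hf p).hasDerivAt.add
    ((HasDerivAt.comp_sub_const p.2 q.2 (hh (p - q)).hasDerivAt).const_mul a)

theorem C2Star.add_translate (hf : C2Star f) (hh : C2Star h) :
    C2Star (fun z => f z + a * h (z - q)) := by
  obtain ⟨f1, f2, f3, f4, f5, f6, f7⟩ := hf
  obtain ⟨h1, h2, h3, h4, h5, h6, h7⟩ := hh
  have eX : pX (fun z => f z + a * h (z - q)) = fun z => pX f z + a * pX h (z - q) :=
    funext fun p => (hasDerivX_add_translate a q f2 h2 p).deriv
  have eY : pY (fun z => f z + a * h (z - q)) = fun z => pY f z + a * pY h (z - q) :=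
    funext fun p => (hasDerivY_add_translate a q f3 h3 p).deriv
  have eXY : pX (pY (fun z => f z + a * h (z - q))) =
      fun z => pX (pY f) z + a * pX (pY h) (z - q) := by
    rw [eY]
    exact funext fun p => (hasDerivX_add_translate a q f4 h4 p).deriv
  have eYX : pY (pX (fun z => f z + a * h (z - q))) =
      fun z => pY (pX f) z + a * pY (pX h) (z - q) := by
    rw [eX]
    exact funext fun p => (hasDerivY_add_translate a q f5 h5 p).deriv
  refine ⟨by fun_prop, fun p => (hasDerivX_add_translate a q f2 h2 p).differentiableAt,
    fun p => (hasDerivY_add_translate a q f3 h3 p).differentiableAt, fun p => ?_, fun p => ?_,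
    ?_, ?_⟩
  · rw [eY]
    exact (hasDerivX_add_translate a q f4 h4 p).differentiableAt
  · rw [eX]
    exact (hasDerivY_add_translate a q f5 h5 p).differentiableAt
  · rw [eXY]
    fun_prop
  · rw [eYX]
    fun_prop

end AddTranslate

theorem C2Star.sub_sum_translate {f g : ℝ × ℝ → ℂ} (hg : C2Star g) (hf : C2Star f)
    (c : ℝ × ℝ → ℂ) (F : Finset (ℝ × ℝ)) :
    C2Star (fun z => g z - ∑ p ∈ F, c p * f (z - p)) := by
  classical
  induction F using Finset.induction_on with
  | empty => simpa using hg
  | insert q F hq ih =>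
    convert ih.add_translate (-c q) q hf using 2 with z
    rw [Finset.sum_insert hq]
    ring

theorem C2Star.zero : C2Star (fun _ => 0) := by
  have eX : pX (fun _ => 0) = fun _ => 0 := funext fun p => by simp [pX]
  have eY : pY (fun _ => 0) = fun _ => 0 := funext fun p => by simp [pY]
  simp [C2Star, eX, eY, continuous_const]

/-! ### Geometry of the cone -/

theorem eNorm2_sq (p : ℝ × ℝ) : eNorm2 p ^ 2 = p.1 ^ 2 + p.2 ^ 2 :=
  Real.sq_sqrt (by positivity)

theorem eNorm2_pos {p : ℝ × ℝ} (hp : p ≠ 0) : 0 < eNorm2 p := by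
  refine Real.sqrt_pos.2 ?_
  by_contra! h
  refine hp (Prod.ext ?_ ?_)
  · exact pow_eq_zero_iff (two_ne_zero) |>.1 (by nlinarith [sq_nonneg p.1, sq_nonneg p.2])
  · exact pow_eq_zero_iff (two_ne_zero) |>.1 (by nlinarith [sq_nonneg p.1, sq_nonneg p.2])

theorem unitBisector_comm (u w : ℝ × ℝ) : unitBisector u w = unitBisector w u := by
  simp only [unitBisector, add_comm]

/-- The angle between a generator and the bisector is acute: up to positive factors the pairing is
`‖u‖ ‖w‖ + ⟨u, w⟩`, which is positive by the strict Cauchy–Schwarz inequality. -/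
theorem pairing_pos {u w : ℝ × ℝ} (huw : LinearIndependent ℝ ![u, w]) :
    0 < (unitBisector u w).1 * u.1 + (unitBisector u w).2 * u.2 := by
  have hu : 0 < eNorm2 u := eNorm2_pos (by simpa using huw.ne_zero 0)
  have hw : 0 < eNorm2 w := eNorm2_pos (by simpa using huw.ne_zero 1)
  rw [LinearIndependent.pair_iff] at huw
  have hs : 0 < eNorm2 ((eNorm2 u)⁻¹ • u + (eNorm2 w)⁻¹ • w) := by
    refine eNorm2_pos fun h => ?_
    exact (inv_pos.2 hu).ne' (huw _ _ h).1
  have hdet : u.1 * w.2 - u.2 * w.1 ≠ 0 := by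
    intro h
    have h1 := huw w.2 (-u.2) (Prod.ext (by simp; linarith) (by simp; ring))
    have h2 := huw w.1 (-u.1) (Prod.ext (by simp; ring) (by simp; linarith))
    have : w = 0 := Prod.ext h2.1 h1.1
    rw [this] at hw
    simp [eNorm2] at hw
  have hu2 := eNorm2_sq u
  have hw2 := eNorm2_sq w
  have hCS : 0 < eNorm2 u * eNorm2 w + (u.1 * w.1 + u.2 * w.2) := by
    have : |u.1 * w.1 + u.2 * w.2| < eNorm2 u * eNorm2 w := by
      refine abs_lt_of_sq_lt_sq ?_ (by positivity)
      rw [mul_pow, hu2, hw2]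
      nlinarith [sq_pos_of_ne_zero hdet]
    linarith [neg_abs_le (u.1 * w.1 + u.2 * w.2)]
  have key : (unitBisector u w).1 * u.1 + (unitBisector u w).2 * u.2 =
      (eNorm2 ((eNorm2 u)⁻¹ • u + (eNorm2 w)⁻¹ • w))⁻¹ *
        ((eNorm2 w)⁻¹ * (eNorm2 u * eNorm2 w + (u.1 * w.1 + u.2 * w.2))) := by
    have e : (eNorm2 u)⁻¹ * (u.1 ^ 2 + u.2 ^ 2) = eNorm2 u := by
      rw [← hu2]
      field_simp
    have e' : (eNorm2 w)⁻¹ * (eNorm2 u * eNorm2 w) = eNorm2 u := by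
      field_simp
    simp only [unitBisector, Prod.smul_fst, Prod.smul_snd, Prod.fst_add, Prod.snd_add, smul_eq_mul]
    generalize (eNorm2 ((eNorm2 u)⁻¹ • u + (eNorm2 w)⁻¹ • w))⁻¹ = k
    linear_combination k * (e - e')
  rw [key]
  positivity

theorem cone_slice_finite {u w : ℝ × ℝ} (huw : LinearIndependent ℝ ![u, w])
    {D : Set (ℝ × ℝ)} (hD : D ⊆ -(coneOf u w)) (hDlf : LocallyFiniteSet D) (R : ℝ) :
    (D ∩ Hr (unitBisector u w) R).Finite := by
  have hpu := pairing_pos huw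
  have hpw := pairing_pos (u := w) (w := u) (LinearIndependent.pair_symm_iff.1 huw)
  rw [unitBisector_comm w u] at hpw
  set v := unitBisector u w
  set a := v.1 * u.1 + v.2 * u.2
  set b := v.1 * w.1 + v.2 * w.2
  have hK : IsCompact ((fun st : ℝ × ℝ => -(st.1 • u + st.2 • w)) ''
      (Set.Icc 0 (-R / a) ×ˢ Set.Icc 0 (-R / b))) :=
    (isCompact_Icc.prod isCompact_Icc).image (by fun_prop)
  refine (hDlf _ hK).subset ?_
  rintro p ⟨hpD, hpR⟩
  obtain ⟨s, t, hs, ht, hp⟩ := hD hpD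
  have hp' : p = -(s • u + t • w) := by rw [← hp, neg_neg]
  have hR : s * a + t * b ≤ -R := by
    have h : R ≤ v.1 * p.1 + v.2 * p.2 := hpR
    rw [hp'] at h
    simp at h
    simp only [a, b]
    linarith
  refine ⟨hpD, (s, t), ⟨⟨hs, ?_⟩, ⟨ht, ?_⟩⟩, hp'.symm⟩
  · rw [le_div_iff₀ hpu]
    linarith [mul_nonneg ht hpw.le]
  · rw [le_div_iff₀ hpw]
    linarith [mul_nonneg hs hpu.le]

/-! ### The Neumann iteration -/

/-- On the half-plane `H_r(v, R)` the convolution with `f` only sees the finitely many points of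
`D` in `H_r(v, R - α)`. -/
theorem conv_eq_sum {v : ℝ × ℝ} {D : Set (ℝ × ℝ)} (hfin : ∀ R, (D ∩ Hr v R).Finite)
    (c : ℝ × ℝ → ℂ) {f : ℝ × ℝ → ℂ} {α : ℝ} (hf : Function.support f ⊆ Hl v α) {R : ℝ}
    {z : ℝ × ℝ} (hz : R ≤ v.1 * z.1 + v.2 * z.2) :
    ∑ᶠ p ∈ D, c p * f (z - p) = ∑ p ∈ (hfin (R - α)).toFinset, c p * f (z - p) := by
  refine finsum_mem_eq_sum_of_inter_support_eq _ ?_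
  ext p
  simp only [Set.mem_inter_iff, Function.mem_support, Set.Finite.coe_toFinset]
  refine ⟨fun ⟨h1, h2⟩ => ⟨⟨h1, ?_⟩, h2⟩, fun h => ⟨h.1.1, h.2⟩⟩
  have h : v.1 * (z - p).1 + v.2 * (z - p).2 ≤ α := hf (right_ne_zero_of_mul h2)
  simp only [Prod.fst_sub, Prod.snd_sub] at h
  change R - α ≤ v.1 * p.1 + v.2 * p.2
  linarith

/-- The partial sums of the Neumann series: the iterates, started at `0`, of the map
`f ↦ g - μ ⋆ f` with `μ = ∑ p ∈ D, c p • δ_p`. -/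
def neumannIter (D : Set (ℝ × ℝ)) (c g : ℝ × ℝ → ℂ) : ℕ → ℝ × ℝ → ℂ
  | 0 => fun _ => 0
  | n + 1 => fun z => g z - ∑ᶠ p ∈ D, c p * neumannIter D c g n (z - p)

section Iter

variable {v : ℝ × ℝ} {D : Set (ℝ × ℝ)} {c g : ℝ × ℝ → ℂ} {α β : ℝ}

theorem pairing_sub_ge (hD : D ⊆ Hl v (-β)) {p : ℝ × ℝ} (hp : p ∈ D) (z : ℝ × ℝ) :
    v.1 * z.1 + v.2 * z.2 + β ≤ v.1 * (z - p).1 + v.2 * (z - p).2 := by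
  have h : v.1 * p.1 + v.2 * p.2 ≤ -β := hD hp
  simp only [Prod.fst_sub, Prod.snd_sub]
  linarith

theorem support_neumannIter (hβ : 0 < β) (hD : D ⊆ Hl v (-β))
    (hgs : Function.support g ⊆ Hl v α) (n : ℕ) :
    Function.support (neumannIter D c g n) ⊆ Hl v α := by
  induction n with
  | zero => simp [neumannIter]
  | succ n ih =>
    intro z hz
    by_contra hza
    refine hz ?_
    have h0 : ∀ p ∈ D, c p * neumannIter D c g n (z - p) = 0 := by
      intro p hp
      rw [mul_eq_zero]
      right
      by_contra h
      have h1 : v.1 * (z - p).1 + v.2 * (z - p).2 ≤ α := ih h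
      have h2 := pairing_sub_ge hD hp z
      exact hza (show v.1 * z.1 + v.2 * z.2 ≤ α by linarith)
    have hg0 : g z = 0 := by
      by_contra h
      exact hza (hgs h)
    simp only [neumannIter]
    rw [hg0, finsum_mem_of_eqOn_zero h0, sub_zero]

theorem C2Star_neumannIter (hβ : 0 < β) (hD : D ⊆ Hl v (-β)) (hfin : ∀ R, (D ∩ Hr v R).Finite)
    (hg : C2Star g) (hgs : Function.support g ⊆ Hl v α) (n : ℕ) :
    C2Star (neumannIter D c g n) := by
  induction n with
  | zero => exact C2Star.zero
  | succ n ih =>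
    refine C2Star.of_local fun z₀ => ?_
    refine ⟨{z | v.1 * z₀.1 + v.2 * z₀.2 - 1 < v.1 * z.1 + v.2 * z.2},
      isOpen_lt (by fun_prop) (by fun_prop), by simp, _, hg.sub_sum_translate ih c
        (hfin (v.1 * z₀.1 + v.2 * z₀.2 - 1 - α)).toFinset, fun z hz => ?_⟩
    simp only [neumannIter]
    rw [conv_eq_sum hfin c (support_neumannIter hβ hD hgs n) (le_of_lt hz)]

theorem neumannIter_succ_eq (hβ : 0 < β) (hD : D ⊆ Hl v (-β))
    (hgs : Function.support g ⊆ Hl v α) (n : ℕ) {z : ℝ × ℝ}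
    (hz : α - n * β < v.1 * z.1 + v.2 * z.2) :
    neumannIter D c g (n + 1) z = neumannIter D c g n z := by
  induction n generalizing z with
  | zero =>
    simp only [Nat.cast_zero, zero_mul, sub_zero] at hz
    change _ = 0
    by_contra h
    have h' : v.1 * z.1 + v.2 * z.2 ≤ α := support_neumannIter (c := c) hβ hD hgs 1 h
    linarith
  | succ n ih =>
    refine congrArg (g z - ·) ?_
    refine finsum_mem_congr rfl fun p hp => ?_
    have h := pairing_sub_ge hD hp z
    push_cast at hz
    rw [ih (by linarith)]

theorem neumannIter_eq_of_le (hβ : 0 < β) (hD : D ⊆ Hl v (-β))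
    (hgs : Function.support g ⊆ Hl v α) {n m : ℕ} (hnm : n ≤ m) {z : ℝ × ℝ}
    (hz : α - n * β < v.1 * z.1 + v.2 * z.2) :
    neumannIter D c g m z = neumannIter D c g n z := by
  induction m, hnm using Nat.le_induction with
  | base => rfl
  | succ m hm ih =>
    have : (n : ℝ) * β ≤ m * β := by gcongr
    rw [neumannIter_succ_eq hβ hD hgs m (by linarith), ih]

end Iter

/-- solving `f ⋆ (δ₀ + μ) = g` for `g` supported in a left
half-plane and `μ` a discrete measure supported in `(−C) ∩ H_l(v,−β)`. -/
theorem neumann_series_solution_left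
    (u w : ℝ × ℝ) (huw : LinearIndependent ℝ ![u, w])
    (hC : coneOf u w ⊆ Hr (unitBisector u w) 0)
    (β : ℝ) (hβ : 0 < β)
    (D : Set (ℝ × ℝ)) (hD : D ⊆ (-(coneOf u w)) ∩ Hl (unitBisector u w) (-β))
    (hDlf : LocallyFiniteSet D) (c : ℝ × ℝ → ℂ)
    (g : ℝ × ℝ → ℂ) (hg : C2Star g) (α : ℝ)
    (hgs : Function.support g ⊆ Hl (unitBisector u w) α) :
    ∃ (f : ℝ × ℝ → ℂ) (α' : ℝ),
      C2Star f ∧ Function.support f ⊆ Hl (unitBisector u w) α' ∧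
      ∀ z : ℝ × ℝ, {p ∈ D | f (z - p) ≠ 0}.Finite ∧
        f z + ∑ᶠ p ∈ D, c p * f (z - p) = g z := by
  set v := unitBisector u w
  have hDv : D ⊆ Hl v (-β) := fun p hp => (hD hp).2
  have hfin : ∀ R, (D ∩ Hr v R).Finite :=
    cone_slice_finite huw (fun p hp => (hD hp).1) hDlf
  have hN : ∀ z : ℝ × ℝ, ∃ n : ℕ, α - n * β < v.1 * z.1 + v.2 * z.2 := fun z => by
    obtain ⟨n, hn⟩ := exists_nat_gt ((α - (v.1 * z.1 + v.2 * z.2)) / β)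
    rw [div_lt_iff₀ hβ] at hn
    exact ⟨n, by linarith⟩
  choose N hN using hN
  set F := neumannIter D c g with hF
  have hsupp : ∀ n, Function.support (F n) ⊆ Hl v α := support_neumannIter hβ hDv hgs
  have hfF : ∀ (n : ℕ) (z : ℝ × ℝ), α - n * β < v.1 * z.1 + v.2 * z.2 → F (N z) z = F n z := by
    intro n z hz
    rcases le_total n (N z) with h | h
    · exact neumannIter_eq_of_le hβ hDv hgs h hz
    · exact (neumannIter_eq_of_le hβ hDv hgs h (hN z)).symm
  refine ⟨fun z => F (N z) z, α, C2Star.of_local fun z₀ => ?_, fun z hz => hsupp _ hz,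
    fun z => ⟨?_, ?_⟩⟩
  · exact ⟨{z | α - N z₀ * β < v.1 * z.1 + v.2 * z.2}, isOpen_lt (by fun_prop) (by fun_prop),
      hN z₀, F (N z₀), C2Star_neumannIter hβ hDv hfin hg hgs _, fun z hz => hfF _ z hz⟩
  · refine (hfin (v.1 * z.1 + v.2 * z.2 - α)).subset ?_
    rintro p ⟨hp, hne⟩
    have h : v.1 * (z - p).1 + v.2 * (z - p).2 ≤ α := hsupp _ hne
    simp only [Prod.fst_sub, Prod.snd_sub] at h
    refine ⟨hp, ?_⟩
    change _ ≤ v.1 * p.1 + v.2 * p.2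
    linarith
  · have hz := hN z
    have e : ∑ᶠ p ∈ D, c p * F (N (z - p)) (z - p) = ∑ᶠ p ∈ D, c p * F (N z) (z - p) := by
      refine finsum_mem_congr rfl fun p hp => ?_
      have h := pairing_sub_ge hDv hp z
      rw [hfF (N z) (z - p) (by linarith)]
    change F (N z) z + ∑ᶠ p ∈ D, c p * F (N (z - p)) (z - p) = g z
    rw [e, hF, ← neumannIter_succ_eq hβ hDv hgs (N z) hz, neumannIter]
    exact sub_add_cancel _ _
end
end

section
/- Let v = (v₁,v₂) ∈ ℝ² with v₁ > 0 and v₂ > 0, let A ∈ ℝ, let S, T > 0, and let g ∈ C^{2*}(ℝ²) with supp(g) ⊆ H_l(v,A). Define f : ℝ² → ℂ by f(x,y) = ∑_{j=0}^{∞} ∑_{k=0}^{∞} (∂²g/∂x∂y)(x + (2j+1)S, y + (2k+1)T), where for each (x,y) only finitely many terms are nonzero. Then f is continuous on ℝ² and for all (x,y) ∈ ℝ², ∫_{−S}^{S} ∫_{−T}^{T} f(x−s, y−t) dt ds = g(x,y); that is, f⋆χ_{[−S,S]×[−T,T]} = g. -/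
/-!
Write `h = ∂²g/∂x∂y`. As `g` vanishes on the open half-plane `{A < v·p}`, so does `h`, and since
`v₁, v₂ > 0` the translates leave the closed half-plane once either index is large, uniformly for
base points in a quadrant `[a,∞) × [b,∞)` (`exists_translate_bound`). Hence on each quadrant `f` is
one fixed finite sum over a square of indices (`finsum_eq_square`), which gives continuity.

Convolving a single translate of `h` with the indicator integrates `h` over a rectangle and gives
the alternating sum of `g` at its four corners (`integral_mixed`). The rectangles coming from the
translates tile `[x, x+2NS] × [y, y+2NT]`, so these alternating sums telescope
(`sum_corners`) to that of the large rectangle, three corners of which lie where `g = 0`.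
-/

noncomputable section

/-- A mixed partial derivative vanishes on the open half-plane where the function does. -/
lemma mixed_eq_zero {v : ℝ × ℝ} {A : ℝ} {g : ℝ × ℝ → ℂ}
    (hsupp : Function.support g ⊆ Hl v A) {p : ℝ × ℝ} (hp : A < v.1 * p.1 + v.2 * p.2) :
    pX (pY g) p = 0 := by
  have hg0 : ∀ q : ℝ × ℝ, A < v.1 * q.1 + v.2 * q.2 → g q = 0 := by
    intro q hq
    by_contra hne
    exact absurd (hsupp hne) (not_le.mpr hq)
  have hY : ∀ q : ℝ × ℝ, A < v.1 * q.1 + v.2 * q.2 → pY g q = 0 := by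
    intro q hq
    have hc : Continuous fun y : ℝ => v.1 * q.1 + v.2 * y := by fun_prop
    have he : (fun y => g (q.1, y)) =ᶠ[nhds q.2] fun _ => (0 : ℂ) := by
      filter_upwards [hc.continuousAt.eventually_const_lt hq] with y hy
      exact hg0 (q.1, y) hy
    simp [pY, he.deriv_eq]
  have hc : Continuous fun x : ℝ => v.1 * x + v.2 * p.2 := by fun_prop
  have he : (fun x => pY g (x, p.2)) =ᶠ[nhds p.1] fun _ => (0 : ℂ) := by
    filter_upwards [hc.continuousAt.eventually_const_lt hp] with x hx
    exact hY (x, p.2) hx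
  simp [pX, he.deriv_eq]

/-- Above a fixed corner `(a, b)`, one bound `N` on the indices serves all base points. -/
lemma exists_translate_bound {v : ℝ × ℝ} (hv1 : 0 < v.1) (hv2 : 0 < v.2) (A : ℝ)
    {S T : ℝ} (hS : 0 < S) (hT : 0 < T) (a b : ℝ) :
    ∃ N : ℕ, ∀ x y : ℝ, a ≤ x → b ≤ y → ∀ j k : ℕ, (N ≤ j ∨ N ≤ k) →
      A < v.1 * (x + 2 * (j : ℝ) * S) + v.2 * (y + 2 * (k : ℝ) * T) := by
  have h1 : 0 < v.1 * S := mul_pos hv1 hS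
  have h2 : 0 < v.2 * T := mul_pos hv2 hT
  obtain ⟨N₁, hN₁⟩ := exists_nat_gt ((|A| + |v.1 * a + v.2 * b|) / (v.1 * S))
  obtain ⟨N₂, hN₂⟩ := exists_nat_gt ((|A| + |v.1 * a + v.2 * b|) / (v.2 * T))
  rw [div_lt_iff₀ h1] at hN₁
  rw [div_lt_iff₀ h2] at hN₂
  refine ⟨max N₁ N₂, fun x y hx hy j k hjk => ?_⟩
  have hx' := mul_le_mul_of_nonneg_left hx hv1.le
  have hy' := mul_le_mul_of_nonneg_left hy hv2.le
  have hj0 : 0 ≤ (j : ℝ) * (v.1 * S) := by positivity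
  have hk0 : 0 ≤ (k : ℝ) * (v.2 * T) := by positivity
  have hA := le_abs_self A
  have hB := neg_abs_le (v.1 * a + v.2 * b)
  have hA0 := abs_nonneg A
  have hB0 := abs_nonneg (v.1 * a + v.2 * b)
  have key : |A| + |v.1 * a + v.2 * b| < (j : ℝ) * (v.1 * S) + (k : ℝ) * (v.2 * T) := by
    rcases hjk with h | h
    · have hc : (N₁ : ℝ) ≤ j := by exact_mod_cast (le_max_left N₁ N₂).trans h
      have := mul_le_mul_of_nonneg_right hc h1.le
      linarith
    · have hc : (N₂ : ℝ) ≤ k := by exact_mod_cast (le_max_right N₁ N₂).trans h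
      have := mul_le_mul_of_nonneg_right hc h2.le
      linarith
  have e : v.1 * (x + 2 * (j : ℝ) * S) + v.2 * (y + 2 * (k : ℝ) * T)
      = v.1 * x + v.2 * y + 2 * ((j : ℝ) * (v.1 * S) + (k : ℝ) * (v.2 * T)) := by ring
  rw [e]
  linarith

lemma support_subset_square {u : ℕ × ℕ → ℂ} {N : ℕ}
    (hu : ∀ j k : ℕ, (N ≤ j ∨ N ≤ k) → u (j, k) = 0) :
    Function.support u ⊆ ↑(Finset.range N ×ˢ Finset.range N) := by
  rintro ⟨j, k⟩ hjk
  simp only [Finset.coe_product, Finset.coe_range, Set.mem_prod, Set.mem_Iio]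
  by_contra hcon
  exact hjk (hu j k (by omega))

lemma finsum_eq_square {u : ℕ × ℕ → ℂ} {N : ℕ}
    (hu : ∀ j k : ℕ, (N ≤ j ∨ N ≤ k) → u (j, k) = 0) :
    ∑ᶠ jk, u jk = ∑ j ∈ Finset.range N, ∑ k ∈ Finset.range N, u (j, k) := by
  rw [finsum_eq_sum_of_support_subset u (support_subset_square hu), Finset.sum_product]

/-- The fundamental theorem of calculus on a rectangle. Continuity of `pY g` is not assumed:
integrating first in `x` gives differences of `pY g` along vertical lines, and these are continuous
in `y` as parameter integrals of the continuous function `pX (pY g)`. -/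
lemma integral_mixed {g : ℝ × ℝ → ℂ} (hg : C2Star g) (c d S T : ℝ) :
    (∫ s in -S..S, ∫ t in -T..T, pX (pY g) (c - s, d - t)) =
      g (c + S, d + T) - g (c - S, d + T) - g (c + S, d - T) + g (c - S, d - T) := by
  obtain ⟨-, -, hdY, hdXY, -, hcont, -⟩ := hg
  have hx : ∀ y : ℝ, (∫ x in (c - S)..(c + S), pX (pY g) (x, y))
      = pY g (c + S, y) - pY g (c - S, y) := by
    intro y
    refine intervalIntegral.integral_eq_sub_of_hasDerivAt
      (f := fun x => pY g (x, y)) (fun x _ => (hdXY (x, y)).hasDerivAt) ?_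
    exact Continuous.intervalIntegrable (by fun_prop) _ _
  have hD : Continuous fun y : ℝ => pY g (c + S, y) - pY g (c - S, y) := by
    simp_rw [← hx]
    exact intervalIntegral.continuous_parametric_intervalIntegral_of_continuous'
      (f := fun y x => pX (pY g) (x, y)) (by fun_prop) _ _
  have hy : (∫ y in (d - T)..(d + T), (pY g (c + S, y) - pY g (c - S, y)))
      = (g (c + S, d + T) - g (c - S, d + T)) - (g (c + S, d - T) - g (c - S, d - T)) := by
    refine intervalIntegral.integral_eq_sub_of_hasDerivAt
      (f := fun y => g (c + S, y) - g (c - S, y))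
      (fun y _ => (hdY (c + S, y)).hasDerivAt.sub (hdY (c - S, y)).hasDerivAt) ?_
    exact hD.intervalIntegrable _ _
  have e1 : (∫ s in -S..S, ∫ t in -T..T, pX (pY g) (c - s, d - t))
      = ∫ x in (c - S)..(c + S), ∫ y in (d - T)..(d + T), pX (pY g) (x, y) := by
    have h1 : ∀ s : ℝ, (∫ t in -T..T, pX (pY g) (c - s, d - t))
        = ∫ y in (d - T)..(d + T), pX (pY g) (c - s, y) := by
      intro s
      rw [intervalIntegral.integral_comp_sub_left (fun y => pX (pY g) (c - s, y)) d,
        sub_neg_eq_add]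
    simp_rw [h1]
    rw [intervalIntegral.integral_comp_sub_left
      (fun x => ∫ y in (d - T)..(d + T), pX (pY g) (x, y)) c, sub_neg_eq_add]
  rw [e1, MeasureTheory.intervalIntegral_intervalIntegral_swap]
  · simp_rw [hx]
    rw [hy]
    ring
  · refine MeasureTheory.IntegrableOn.mono_set ?_
      (Set.prod_mono Set.uIoc_subset_uIcc Set.uIoc_subset_uIcc)
    exact ContinuousOn.integrableOn_compact (isCompact_uIcc.prod isCompact_uIcc)
      (Continuous.continuousOn (show Continuous (pX (pY g)) from hcont))

/-- Telescoping in both indices. -/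
lemma sum_corners (u : ℕ → ℕ → ℂ) (M N : ℕ) :
    ∑ j ∈ Finset.range M, ∑ k ∈ Finset.range N,
      (u (j + 1) (k + 1) - u j (k + 1) - u (j + 1) k + u j k)
      = u M N - u 0 N - u M 0 + u 0 0 := by
  have h1 : ∀ j, ∑ k ∈ Finset.range N,
      (u (j + 1) (k + 1) - u j (k + 1) - u (j + 1) k + u j k)
      = (u (j + 1) N - u (j + 1) 0) - (u j N - u j 0) := by
    intro j
    rw [← Finset.sum_range_sub (u (j + 1)), ← Finset.sum_range_sub (u j),
      ← Finset.sum_sub_distrib]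
    exact Finset.sum_congr rfl fun k _ => by ring
  simp_rw [h1]
  rw [Finset.sum_range_sub (fun j => u j N - u j 0)]
  ring

/-- the series `f(x,y) = ∑_{j,k} (∂²g/∂x∂y)(x+(2j+1)S, y+(2k+1)T)`
is a well-defined (locally finite) sum, is continuous, and solves
`f ⋆ χ_{[−S,S]×[−T,T]} = g`. -/
theorem rectangle_inversion_left
    (v : ℝ × ℝ) (hv1 : 0 < v.1) (hv2 : 0 < v.2) (A : ℝ)
    (S T : ℝ) (hS : 0 < S) (hT : 0 < T)
    (g : ℝ × ℝ → ℂ) (hg : C2Star g) (hsupp : Function.support g ⊆ Hl v A)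
    (f : ℝ × ℝ → ℂ)
    (hf : ∀ z : ℝ × ℝ, f z = ∑ᶠ jk : ℕ × ℕ,
      pX (pY g) (z.1 + (2 * (jk.1 : ℝ) + 1) * S, z.2 + (2 * (jk.2 : ℝ) + 1) * T)) :
    (∀ z : ℝ × ℝ, (Function.support (fun jk : ℕ × ℕ =>
      pX (pY g) (z.1 + (2 * (jk.1 : ℝ) + 1) * S,
                 z.2 + (2 * (jk.2 : ℝ) + 1) * T))).Finite) ∧
    Continuous f ∧
    ∀ x y : ℝ, (∫ s in -S..S, ∫ t in -T..T, f (x - s, y - t)) = g (x, y) := by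
  have hg' := hg
  obtain ⟨-, -, -, -, -, hcont, -⟩ := hg'
  have hg0 : ∀ q : ℝ × ℝ, A < v.1 * q.1 + v.2 * q.2 → g q = 0 := by
    intro q hq
    by_contra hne
    exact absurd (hsupp hne) (not_le.mpr hq)
  have hterm : ∀ a b : ℝ, ∃ N : ℕ,
      (∀ z : ℝ × ℝ, a ≤ z.1 → b ≤ z.2 → ∀ j k : ℕ, (N ≤ j ∨ N ≤ k) →
        pX (pY g) (z.1 + (2 * (j : ℝ) + 1) * S, z.2 + (2 * (k : ℝ) + 1) * T) = 0) ∧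
      (∀ z : ℝ × ℝ, a ≤ z.1 → b ≤ z.2 → ∀ j k : ℕ, (N ≤ j ∨ N ≤ k) →
        g (z.1 + 2 * (j : ℝ) * S, z.2 + 2 * (k : ℝ) * T) = 0) := by
    intro a b
    obtain ⟨N, hN⟩ := exists_translate_bound hv1 hv2 A hS hT a b
    refine ⟨N, fun z h1 h2 j k hjk => mixed_eq_zero hsupp ?_,
      fun z h1 h2 j k hjk => hg0 _ (hN z.1 z.2 h1 h2 j k hjk)⟩
    have := hN (z.1 + S) (z.2 + T) (by linarith) (by linarith) j k hjk
    convert this using 3 <;> ring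
  have hfsum : ∀ {a b : ℝ} {N : ℕ},
      (∀ z : ℝ × ℝ, a ≤ z.1 → b ≤ z.2 → ∀ j k : ℕ, (N ≤ j ∨ N ≤ k) →
        pX (pY g) (z.1 + (2 * (j : ℝ) + 1) * S, z.2 + (2 * (k : ℝ) + 1) * T) = 0) →
      ∀ z : ℝ × ℝ, a ≤ z.1 → b ≤ z.2 →
        f z = ∑ j ∈ Finset.range N, ∑ k ∈ Finset.range N,
          pX (pY g) (z.1 + (2 * (j : ℝ) + 1) * S, z.2 + (2 * (k : ℝ) + 1) * T) := by
    intro a b N hN z h1 h2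
    rw [hf, finsum_eq_square (hN z h1 h2)]
  refine ⟨fun z => ?_, ?_, fun x y => ?_⟩
  · obtain ⟨N, hN, -⟩ := hterm z.1 z.2
    exact (Finset.finite_toSet _).subset (support_subset_square (hN z le_rfl le_rfl))
  · rw [continuous_iff_continuousAt]
    intro z₀
    obtain ⟨N, hN, -⟩ := hterm (z₀.1 - 1) (z₀.2 - 1)
    have hc : Continuous fun z : ℝ × ℝ => ∑ j ∈ Finset.range N, ∑ k ∈ Finset.range N,
        pX (pY g) (z.1 + (2 * (j : ℝ) + 1) * S, z.2 + (2 * (k : ℝ) + 1) * T) := by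
      fun_prop
    refine hc.continuousAt.congr ?_
    filter_upwards [continuous_fst.continuousAt.eventually_const_lt (sub_one_lt z₀.1),
      continuous_snd.continuousAt.eventually_const_lt (sub_one_lt z₀.2)] with z h1 h2
    exact (hfsum hN z h1.le h2.le).symm
  · obtain ⟨N, hN, hgN⟩ := hterm (x - S) (y - T)
    -- On the domain of integration `(x - s, y - t)` stays in the quadrant above `(x - S, y - T)`.
    have hint : (∫ s in -S..S, ∫ t in -T..T, f (x - s, y - t))
        = ∫ s in -S..S, ∫ t in -T..T, ∑ j ∈ Finset.range N, ∑ k ∈ Finset.range N,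
          pX (pY g) ((x + (2 * (j : ℝ) + 1) * S) - s, (y + (2 * (k : ℝ) + 1) * T) - t) := by
      refine intervalIntegral.integral_congr fun s hs => ?_
      refine intervalIntegral.integral_congr fun t ht => ?_
      rw [Set.uIcc_of_le (by linarith)] at hs ht
      have := hfsum hN (x - s, y - t) (by linarith [hs.2]) (by linarith [ht.2])
      simp only [this, sub_add_eq_add_sub]
    have hswap : (∫ s in -S..S, ∫ t in -T..T, ∑ j ∈ Finset.range N, ∑ k ∈ Finset.range N,
          pX (pY g) ((x + (2 * (j : ℝ) + 1) * S) - s, (y + (2 * (k : ℝ) + 1) * T) - t))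
        = ∑ j ∈ Finset.range N, ∑ k ∈ Finset.range N, ∫ s in -S..S, ∫ t in -T..T,
          pX (pY g) ((x + (2 * (j : ℝ) + 1) * S) - s, (y + (2 * (k : ℝ) + 1) * T) - t) := by
      simp_rw [← Finset.sum_product']
      have hin : ∀ s : ℝ, (∫ t in -T..T, ∑ p ∈ Finset.range N ×ˢ Finset.range N,
          pX (pY g) ((x + (2 * (p.1 : ℝ) + 1) * S) - s, (y + (2 * (p.2 : ℝ) + 1) * T) - t))
          = ∑ p ∈ Finset.range N ×ˢ Finset.range N, ∫ t in -T..T,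
          pX (pY g) ((x + (2 * (p.1 : ℝ) + 1) * S) - s, (y + (2 * (p.2 : ℝ) + 1) * T) - t) :=
        fun s => intervalIntegral.integral_finsetSum fun p _ =>
          Continuous.intervalIntegrable (by fun_prop) _ _
      simp_rw [hin]
      refine intervalIntegral.integral_finsetSum fun p _ => Continuous.intervalIntegrable ?_ _ _
      exact intervalIntegral.continuous_parametric_intervalIntegral_of_continuous'
        (f := fun s t => pX (pY g)
          ((x + (2 * (p.1 : ℝ) + 1) * S) - s, (y + (2 * (p.2 : ℝ) + 1) * T) - t))
        (by fun_prop) _ _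
    rw [hint, hswap]
    simp_rw [integral_mixed hg]
    have htel := sum_corners
      (fun j k => g (x + 2 * (j : ℝ) * S, y + 2 * (k : ℝ) * T)) N N
    have h1 := hgN (x, y) (by linarith) (by linarith) N N (Or.inl le_rfl)
    have h2 := hgN (x, y) (by linarith) (by linarith) 0 N (Or.inr le_rfl)
    have h3 := hgN (x, y) (by linarith) (by linarith) N 0 (Or.inl le_rfl)
    simp only [h1, h2, h3] at htel
    have hfin : g (x, y) = 0 - 0 - 0 + g (x + 2 * ((0 : ℕ) : ℝ) * S, y + 2 * ((0 : ℕ) : ℝ) * T) := by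
      simp
    rw [hfin, ← htel]
    refine Finset.sum_congr rfl fun j _ => Finset.sum_congr rfl fun k _ => ?_
    -- Each rectangle spans consecutive grid points: `(2j+1)S ± S` are `2(j+1)S` and `2jS`.
    have a1 : x + (2 * (j : ℝ) + 1) * S + S = x + 2 * ((j + 1 : ℕ) : ℝ) * S := by push_cast; ring
    have a2 : x + (2 * (j : ℝ) + 1) * S - S = x + 2 * (j : ℝ) * S := by ring
    have b1 : y + (2 * (k : ℝ) + 1) * T + T = y + 2 * ((k + 1 : ℕ) : ℝ) * T := by push_cast; ring
    have b2 : y + (2 * (k : ℝ) + 1) * T - T = y + 2 * (k : ℝ) * T := by ring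
    rw [a1, a2, b1, b2]
end
end
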